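/- arXiv:0908.1698 — 2 statements merged into one kernel-verified Lean document; each statement's English description precedes it below -/
import Mathlib

section
/- For every d ≥ 1 there exists an illuminated d-polytope with exactly M(d) vertices. -/
open scoped RealInnerProductSpace

noncomputable section

/-- We work in `ℝ^d`, modelled as Euclidean space. -/
abbrev Euc (d : ℕ) := EuclideanSpace ℝ (Fin d)

/-- `P` is a polytope: the convex hull of a finite set of points. -/
def IsPolytope {d : ℕ} (P : Set (Euc d)) : Prop :=
  ∃ V : Set (Euc d), V.Finite ∧ P = convexHull ℝ V

/-- `P` is a `d`-polytope in `ℝ^d`: a polytope whose affine span is all of `ℝ^d`. -/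
def IsDPolytope {d : ℕ} (P : Set (Euc d)) : Prop :=
  IsPolytope P ∧ affineSpan ℝ P = ⊤

/-- The vertices of a polytope are its extreme points. -/
def verts {d : ℕ} (P : Set (Euc d)) : Set (Euc d) :=
  Set.extremePoints ℝ P

/-- `[u,v]` is an inner diagonal of `P`: `u`, `v` are distinct vertices and the
relative interior of the segment (the open segment) meets the interior of `P`. -/
def InnerDiagonal {d : ℕ} (P : Set (Euc d)) (u v : Euc d) : Prop :=
  u ∈ verts P ∧ v ∈ verts P ∧ u ≠ v ∧ (openSegment ℝ u v ∩ interior P).Nonempty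

/-- `P` is illuminated: every vertex lies on an inner diagonal. -/
def Illuminated {d : ℕ} (P : Set (Euc d)) : Prop :=
  ∀ v ∈ verts P, ∃ u, InnerDiagonal P u v

/-- A set `U` of vertices illuminates itself if every `v ∈ U` lies on an inner
diagonal `[u,v]` with `u ∈ U`. -/
def IlluminatesItself {d : ℕ} (P : Set (Euc d)) (U : Set (Euc d)) : Prop :=
  ∀ v ∈ U, ∃ u ∈ U, InnerDiagonal P u v

/-- A set `W` of vertices lies opposite the vertex `v ∉ W` if `[v,w]` is an inner
diagonal for all `w ∈ W`, and the remaining vertices illuminate themselves. -/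
def LiesOpposite {d : ℕ} (P : Set (Euc d)) (W : Set (Euc d)) (v : Euc d) : Prop :=
  v ∈ verts P ∧ W ⊆ verts P ∧ v ∉ W ∧ (∀ w ∈ W, InnerDiagonal P v w) ∧
    IlluminatesItself P (verts P \ (W ∪ {v}))

/-- `Γ(P)`: the maximum cardinality of a set lying opposite some vertex (`0` if none). -/
def Gamma {d : ℕ} (P : Set (Euc d)) : ℕ :=
  sSup {n : ℕ | ∃ W v, LiesOpposite P W v ∧ W.ncard = n}

/-- `p(d) = ⌈(√(4d+1) - 1)/2⌉`. -/
def pf (d : ℕ) : ℕ := ⌈(Real.sqrt (4 * d + 1) - 1) / 2⌉₊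

/-- `M(d) = min {2d, d + p(d) + ⌈d/p(d)⌉ + 1}`. -/
def Mf (d : ℕ) : ℕ := min (2 * d) (d + pf d + ⌈(d : ℝ) / (pf d : ℝ)⌉₊ + 1)

/-- A Mani `d`-polytope: an illuminated `d`-polytope with exactly `M(d)` vertices. -/
def IsManiPolytope {d : ℕ} (P : Set (Euc d)) : Prop :=
  IsDPolytope P ∧ Illuminated P ∧ (verts P).ncard = Mf d

/-- A facet of a `d`-polytope: an exposed face of dimension `d - 1`. -/
def IsFacetOf {d : ℕ} (P F : Set (Euc d)) : Prop :=
  IsExposed ℝ P F ∧ Module.finrank ℝ (affineSpan ℝ F).direction = d - 1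

/-- `S` is the vertex set of an (exposed) face of `P`. -/
def IsFaceVertexSet {d : ℕ} (P S : Set (Euc d)) : Prop :=
  ∃ F : Set (Euc d), IsExposed ℝ P F ∧ S = verts P ∩ F

/-- Combinatorial equivalence: a bijection of the vertex sets carrying vertex sets
of faces to vertex sets of faces in both directions. -/
def CombEquiv {d : ℕ} (P Q : Set (Euc d)) : Prop :=
  ∃ f : Euc d → Euc d, Set.BijOn f (verts P) (verts Q) ∧
    ∀ S ⊆ verts P, (IsFaceVertexSet P S ↔ IsFaceVertexSet Q (f '' S))

/-- The `d`-dimensional crosspolytope `conv {±e₁, …, ±e_d}`. -/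
def crossPolytope (d : ℕ) : Set (Euc d) :=
  convexHull ℝ
    {x | ∃ i : Fin d, x = EuclideanSpace.single i 1 ∨ x = -EuclideanSpace.single i 1}

/-- `{u, v}` is the vertex set of an edge (a `1`-dimensional exposed face) of `P`. -/
def IsEdgeVertexSet {d : ℕ} (P : Set (Euc d)) (u v : Euc d) : Prop :=
  ∃ F : Set (Euc d), IsExposed ℝ P F ∧
    Module.finrank ℝ (affineSpan ℝ F).direction = 1 ∧ Set.extremePoints ℝ F = {u, v}


theorem gale {ι V : Type} [Fintype ι] [DecidableEq ι] [Nonempty ι] [AddCommGroup V] [Module ℝ V]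
    [FiniteDimensional ℝ V] {d : ℕ} (T : V →ₗ[ℝ] (ι → ℝ))
    (hcard : Fintype.card ι = d + Module.finrank ℝ V + 1)
    (hsum : ∀ v, ∑ i, T v i = 0)
    (hA : ∀ v, (∃ a, ∀ b, b ≠ a → 0 ≤ T v b) → v = 0)
    (hB : ∀ i, ∃ i', i' ≠ i ∧ ∃ v, ∀ j, j ≠ i → j ≠ i' → 0 < T v j) :
    ∃ P : Set (Euc d), IsDPolytope P ∧ Illuminated P ∧ (verts P).ncard = Fintype.card ι := by
  have hn : (0 : ℝ) < Fintype.card ι := by exact_mod_cast Fintype.card_pos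
  -- the extended map
  let one : ι → ℝ := fun _ => 1
  let T' : (V × ℝ) →ₗ[ℝ] (ι → ℝ) := T.coprod (LinearMap.toSpanSingleton ℝ _ one)
  have hT' : ∀ v c i, T' (v, c) i = T v i + c := by
    intro v c i
    simp [T', one]
  have hsum' : ∀ v c, ∑ i, T' (v, c) i = Fintype.card ι * c := by
    intro v c
    simp [hT', Finset.sum_add_distrib, hsum]
  have hinj : Function.Injective T' := by
    rw [injective_iff_map_eq_zero]
    rintro ⟨v, c⟩ h
    have h1 := hsum' v c
    rw [h] at h1
    have hc : c = 0 := by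
      have : (Fintype.card ι : ℝ) * c = 0 := by rw [← h1]; simp
      rcases mul_eq_zero.1 this with h | h
      · exact absurd h hn.ne'
      · exact h
    subst hc
    have hv : v = 0 := by
      apply hA v
      refine ⟨Classical.arbitrary ι, fun b _ => ?_⟩
      have := hT' v 0 b
      rw [h] at this
      simp at this
      rw [← this]
    rw [hv]; rfl
  let N := LinearMap.range T'
  have hN : Module.finrank ℝ N = Module.finrank ℝ V + 1 := by
    rw [LinearMap.finrank_range_of_inj hinj, Module.finrank_prod, Module.finrank_self]
  have hq : Module.finrank ℝ ((ι → ℝ) ⧸ N) = Module.finrank ℝ (Euc d) := by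
    have h1 := Submodule.finrank_quotient_add_finrank N
    rw [hN, Module.finrank_fintype_fun_eq_card, hcard] at h1
    rw [finrank_euclideanSpace_fin]
    omega
  let e : ((ι → ℝ) ⧸ N) ≃ₗ[ℝ] Euc d := LinearEquiv.ofFinrankEq _ _ hq
  let π : (ι → ℝ) →ₗ[ℝ] Euc d := e.toLinearMap ∘ₗ N.mkQ
  have hπsurj : Function.Surjective π := e.surjective.comp N.mkQ_surjective
  have hπker : ∀ a, π a = 0 ↔ ∃ v c, T' (v, c) = a := by
    intro a
    have : π a = 0 ↔ a ∈ N := by simp [π]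
    rw [this]
    simp [N]
  have hπopen : IsOpenMap π := by
    have := (LinearMap.toContinuousLinearMap π).isOpenMap (by simpa using hπsurj)
    simpa using this
  have hπT : ∀ v, π (T v) = 0 := fun v => (hπker _).2 ⟨v, 0, by ext i; simp [hT']⟩
  have hπ1 : π one = 0 := (hπker _).2 ⟨0, 1, by ext i; simp [hT', one]⟩
  let x : ι → Euc d := fun i => π (Pi.single i 1)
  let P : Set (Euc d) := convexHull ℝ (Set.range x)
  have hP : P = π '' stdSimplex ℝ ι := by
    have h1 : stdSimplex ℝ ι = convexHull ℝ (Set.range fun i : ι => (Pi.single i 1 : ι → ℝ)) := by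
      rw [← convexHull_basis_eq_stdSimplex]
      congr 1
      ext y
      simp [Pi.single_apply, funext_iff, eq_comm]
    rw [h1, LinearMap.image_convexHull, ← Set.range_comp]
    rfl
  -- uniqueness
  have huniq : ∀ i, ∀ a ∈ stdSimplex ℝ ι, π a = x i → a = Pi.single i 1 := by
    intro i a ha h
    have h0 : π (a - Pi.single i 1) = 0 := by rw [map_sub, h]; simp [x]
    obtain ⟨v, c, hvc⟩ := (hπker _).1 h0
    have hs := hsum' v c
    rw [hvc] at hs
    have hc : c = 0 := by
      have : ∑ j, (a - Pi.single i 1 : ι → ℝ) j = 0 := by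
        simp [Finset.sum_sub_distrib, ha.2]
      rw [this] at hs
      rcases mul_eq_zero.1 hs.symm with h | h
      · exact absurd h hn.ne'
      · exact h
    subst hc
    have hv : v = 0 := by
      apply hA v
      refine ⟨i, fun b hb => ?_⟩
      have h2 := hT' v 0 b
      rw [hvc] at h2
      simp [hb] at h2
      rw [← h2]
      exact ha.1 b
    subst hv
    have : T' ((0 : V), (0 : ℝ)) = 0 := map_zero T'
    rw [this] at hvc
    exact (sub_eq_zero.1 hvc.symm)
  have hsingle : ∀ i, (Pi.single i 1 : ι → ℝ) ∈ stdSimplex ℝ ι := fun i => single_mem_stdSimplex ℝ i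
  have hxinj : Function.Injective x := by
    intro i j h
    have := huniq j _ (hsingle i) h
    by_contra hij
    have h2 := congrFun this i
    simp [hij] at h2
  have hverts : verts P = Set.range x := by
    apply Set.Subset.antisymm
    · exact extremePoints_convexHull_subset
    · rintro _ ⟨i, rfl⟩
      refine ⟨subset_convexHull ℝ _ ⟨i, rfl⟩, ?_⟩
      intro y hy z hz hyz
      rw [hP] at hy hz
      obtain ⟨a, ha, rfl⟩ := hy
      obtain ⟨b, hb, rfl⟩ := hz
      obtain ⟨s, t, hs, ht, hst, heq⟩ := hyz
      have hab := huniq i (s • a + t • b)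
        ((convex_stdSimplex ℝ ι) ha hb hs.le ht.le hst) (by rw [← heq]; simp)
      have haz : ∀ j, j ≠ i → a j = 0 := by
        intro j hj
        have h3 := congrFun hab j
        simp [hj] at h3
        have h4 := mul_nonneg hs.le (ha.1 j)
        have h5 := mul_nonneg ht.le (hb.1 j)
        have h6 : s * a j = 0 := by linarith
        rcases mul_eq_zero.1 h6 with h | h
        · exact absurd h hs.ne'
        · exact h
      have hai : a i = 1 := by
        rw [← ha.2, Finset.sum_eq_single i (fun j _ hj => haz j hj) (by simp)]
      have : a = Pi.single i 1 := by
        ext j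
        by_cases hj : j = i
        · subst hj; simp [hai]
        · simp [hj, haz j hj]
      rw [this]
  have hint : ∀ a : ι → ℝ, (∀ i, 0 < a i) → ∑ i, a i = 1 → π a ∈ interior P := by
    intro a ha hs
    let O : Set (ι → ℝ) := {b | ∀ i, 0 < b i + (1 - ∑ j, b j) / Fintype.card ι}
    have hO : IsOpen O := by
      have : O = ⋂ i, {b : ι → ℝ | 0 < b i + (1 - ∑ j, b j) / Fintype.card ι} := by
        ext b; simp [O]
      rw [this]
      refine isOpen_iInter_of_finite fun i => isOpen_lt (by fun_prop) (by fun_prop)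
    have hsub : π '' O ⊆ P := by
      rintro _ ⟨b, hb, rfl⟩
      rw [hP]
      refine ⟨b + ((1 - ∑ j, b j) / Fintype.card ι) • one, ⟨fun i => ?_, ?_⟩, ?_⟩
      · have := hb i
        simp [one]
        exact this.le
      · simp [one, Finset.sum_add_distrib]
        field_simp
        ring
      · rw [map_add, map_smul, hπ1]; simp
    refine interior_maximal hsub (hπopen _ hO) ⟨a, fun i => ?_, rfl⟩
    rw [hs]; simpa using ha i
  refine ⟨P, ⟨⟨Set.range x, Set.finite_range x, rfl⟩, ?_⟩, ?_, ?_⟩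
  · have hne : (interior P).Nonempty :=
      ⟨_, hint (fun _ => 1 / Fintype.card ι) (fun _ => by positivity) (by simp)⟩
    exact affineSpan_eq_top_of_nonempty_interior (by rwa [show convexHull ℝ P = P from
      (convex_convexHull ℝ _).convexHull_eq])
  · intro v hv
    rw [hverts] at hv
    obtain ⟨i, rfl⟩ := hv
    obtain ⟨i', hne, v, hv⟩ := hB i
    refine ⟨x i', ?_, ?_, fun h => hne (hxinj h), ?_⟩
    · rw [hverts]; exact ⟨i', rfl⟩
    · rw [hverts]; exact ⟨i, rfl⟩
    · let M : ℝ := |T v i| + |T v i'| + 1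
      have hM : 0 < M := by positivity
      let ε : ℝ := 1 / (4 * M)
      have hε : 0 < ε := by positivity
      have hεM : ε * M = 1 / 4 := by simp only [ε]; field_simp
      let a : ι → ℝ := (1 / 2 : ℝ) • (Pi.single i' 1 : ι → ℝ) + (1 / 2 : ℝ) • (Pi.single i 1 : ι → ℝ)
        + ε • T v
      have hbound : ∀ y : ℝ, |y| ≤ M → 0 < 1 / 2 + ε * y := by
        intro y hy
        have h1 : ε * |y| ≤ ε * M := mul_le_mul_of_nonneg_left hy hε.le
        have h2 : ε * (-|y|) ≤ ε * y := mul_le_mul_of_nonneg_left (neg_abs_le y) hε.le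
        nlinarith
      have hpos : ∀ j, 0 < a j := by
        intro j
        by_cases h1 : j = i
        · subst h1
          have := hbound (T v j) (by simp only [M]; nlinarith [abs_nonneg (T v i')])
          simpa [a, hne.symm, hne] using this
        · by_cases h2 : j = i'
          · subst h2
            have := hbound (T v j) (by simp only [M]; nlinarith [abs_nonneg (T v i)])
            simpa [a, h1] using this
          · simp [a, h1, h2]
            exact mul_pos hε (hv j h1 h2)
      have hs : ∑ j, a j = 1 := by
        simp [a, Finset.sum_add_distrib, ← Finset.mul_sum, hsum]
        norm_num
      refine ⟨π a, ⟨1 / 2, 1 / 2, by norm_num, by norm_num, by norm_num, ?_⟩, hint a hpos hs⟩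
      simp only [a, map_add, map_smul, hπT, x]
      simp
  · rw [hverts, ← Set.image_univ, Set.ncard_image_of_injective _ hxinj, Set.ncard_univ,
      Nat.card_eq_fintype_card]

theorem gale_ker {ι W : Type} [Fintype ι] [DecidableEq ι] [Nonempty ι] [AddCommGroup W] [Module ℝ W]
    [FiniteDimensional ℝ W] {d : ℕ} (T : W →ₗ[ℝ] (ι → ℝ)) (s : W →ₗ[ℝ] ℝ) (hs : s ≠ 0)
    (hcard : Fintype.card ι = d + Module.finrank ℝ W)
    (hsum : ∀ v, s v = 0 → ∑ i, T v i = 0)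
    (hA : ∀ v, s v = 0 → (∃ a, ∀ b, b ≠ a → 0 ≤ T v b) → v = 0)
    (hB : ∀ i, ∃ i', i' ≠ i ∧ ∃ v, s v = 0 ∧ ∀ j, j ≠ i → j ≠ i' → 0 < T v j) :
    ∃ P : Set (Euc d), IsDPolytope P ∧ Illuminated P ∧ (verts P).ncard = Fintype.card ι := by
  have hr : LinearMap.range s = ⊤ := LinearMap.range_eq_top.2 (LinearMap.surjective hs)
  have h1 := LinearMap.finrank_range_add_finrank_ker s
  rw [hr, finrank_top, Module.finrank_self] at h1
  refine gale (V := LinearMap.ker s) (T.domRestrict (LinearMap.ker s)) (by omega) ?_ ?_ ?_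
  · rintro ⟨v, hv⟩
    exact hsum v hv
  · rintro ⟨v, hv⟩ h
    have := hA v hv h
    subst this
    rfl
  · intro i
    obtain ⟨i', hne, v, hv, h⟩ := hB i
    exact ⟨i', hne, ⟨v, hv⟩, h⟩

theorem cross_case {d : ℕ} (hd : 1 ≤ d) :
    ∃ P : Set (Euc d), IsDPolytope P ∧ Illuminated P ∧ (verts P).ncard = 2 * d := by
  have : NeZero d := ⟨by omega⟩
  have hc : Fintype.card (Fin d × Bool) = 2 * d := by simp [mul_comm]
  rw [← hc]
  let s : (Fin d → ℝ) →ₗ[ℝ] ℝ := ∑ i, LinearMap.proj i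
  have hs : ∀ v, s v = ∑ i, v i := by intro v; simp [s]
  refine gale_ker (W := Fin d → ℝ) (LinearMap.pi fun x : Fin d × Bool => LinearMap.proj x.1)
    s ?_ (by simp; ring) ?_ ?_ ?_
  · intro h
    have h1 := hs (Pi.single 0 1)
    rw [h] at h1
    simp at h1
  · intro v hv
    rw [hs] at hv
    simp [Fintype.sum_prod_type, ← Finset.mul_sum, hv]
  · rintro v hv ⟨⟨a, b⟩, h⟩
    rw [hs] at hv
    have h0 : ∀ i, 0 ≤ v i := by
      intro i
      exact h (i, !b) (by simp)
    have := (Finset.sum_eq_zero_iff_of_nonneg (fun i _ => h0 i)).1 hv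
    ext i
    exact this i (Finset.mem_univ i)
  · rintro ⟨i, b⟩
    refine ⟨(i, !b), by simp, fun j => 1 - if j = i then (d : ℝ) else 0, ?_, ?_⟩
    · rw [hs]; simp
    · rintro ⟨j, b'⟩ h1 h2
      have : j ≠ i := by
        rintro rfl
        cases b <;> cases b' <;> simp_all
      simp [this]

theorem star_case {p q d : ℕ} (hp : 2 ≤ p) (hq : 2 ≤ q) (k : Fin (p + 1) → ℕ)
    (hk : ∀ i, 1 ≤ k i) (hkq : ∀ i, k i ≤ q)
    (χ : ∀ i, Fin q → Fin (k i)) (σ : ∀ i, Fin (k i) → Fin q) (hχσ : ∀ i j, χ i (σ i j) = j)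
    (hinj : ∀ i, i ≠ 0 → Function.Injective (χ i))
    (hd : ∑ i, (k i + 1) = d + (p + 1 + q)) :
    ∃ P : Set (Euc d), IsDPolytope P ∧ Illuminated P ∧
      (verts P).ncard = d + (p + 1 + q) := by
  classical
  have hc : Fintype.card (Σ i : Fin (p + 1), Option (Fin (k i))) = d + (p + 1 + q) := by
    rw [← hd]; simp
  rw [← hc]
  have : Nonempty (Σ i : Fin (p + 1), Option (Fin (k i))) := ⟨⟨0, none⟩⟩
  let s : ((Fin (p + 1) → ℝ) × (Fin q → ℝ)) →ₗ[ℝ] ℝ := (∑ i, LinearMap.proj i) ∘ₗ LinearMap.fst ℝ _ _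
  have hs : ∀ v : ((Fin (p + 1) → ℝ) × (Fin q → ℝ)), s v = ∑ i, v.1 i := by intro v; simp [s]
  let f : (Σ i : Fin (p + 1), Option (Fin (k i))) → ((Fin (p + 1) → ℝ) × (Fin q → ℝ)) → ℝ := fun x v =>
    match x with
    | ⟨i, none⟩ => (p * q - 1) * v.1 i - ∑ l, v.2 l
    | ⟨i, some j⟩ => (q / k i) * v.1 i + ∑ l, if χ i l = j then v.2 l else 0
  let T : ((Fin (p + 1) → ℝ) × (Fin q → ℝ)) →ₗ[ℝ] ((Σ i : Fin (p + 1), Option (Fin (k i))) → ℝ) :=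
    { toFun := fun v x => f x v
      map_add' := by
        intro v w
        ext ⟨i, _ | j⟩
        · simp [f, Finset.sum_add_distrib]; ring
        · simp only [f, Prod.fst_add, Prod.snd_add, Pi.add_apply]
          have : ∀ l, (if χ i l = j then v.2 l + w.2 l else 0) =
            (if χ i l = j then v.2 l else 0) + (if χ i l = j then w.2 l else 0) := by
            intro l; split_ifs <;> simp
          simp only [this, Finset.sum_add_distrib]
          ring
      map_smul' := by
        intro c v
        ext ⟨i, _ | j⟩
        · simp [f, ← Finset.mul_sum]; ring
        · simp only [f, Prod.smul_fst, Prod.smul_snd, Pi.smul_apply, smul_eq_mul, RingHom.id_apply]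
          have : ∀ l, (if χ i l = j then c * v.2 l else 0) =
            c * (if χ i l = j then v.2 l else 0) := by
            intro l; split_ifs <;> simp
          simp only [this, ← Finset.mul_sum]
          ring }
  have hTv : ∀ v i, T v ⟨i, none⟩ = (p * q - 1) * v.1 i - ∑ l, v.2 l := fun v i => rfl
  have hTw : ∀ v i j, T v ⟨i, some j⟩ =
    (q / k i) * v.1 i + ∑ l, if χ i l = j then v.2 l else 0 := fun v i j => rfl
  have hkpos : ∀ i, (0 : ℝ) < k i := fun i => by exact_mod_cast hk i
  have hsumw : ∀ v i, ∑ j, T v ⟨i, some j⟩ = q * v.1 i + ∑ l, v.2 l := by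
    intro v i
    simp only [hTw, Finset.sum_add_distrib]
    congr 1
    · have := (hkpos i).ne'
      simp
      field_simp
    · rw [Finset.sum_comm]
      simp
  have hp' : (2 : ℝ) ≤ p := by exact_mod_cast hp
  have hq' : (2 : ℝ) ≤ q := by exact_mod_cast hq
  have hpq : (4 : ℝ) ≤ p * q := by nlinarith
  -- final step of (A)
  have hfin : ∀ v : ((Fin (p + 1) → ℝ) × (Fin q → ℝ)), (∀ i, 0 ≤ v.1 i) → ∑ i, v.1 i = 0 → ∑ l, v.2 l = 0 →
      (∃ i, i ≠ 0 ∧ ∀ j, 0 ≤ T v ⟨i, some j⟩) → v = 0 := by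
    rintro ⟨φ, ψ⟩ h1 h2 h3 ⟨i, hi, h4⟩
    simp only at h1 h2 h3
    have hφ : ∀ i, φ i = 0 := fun i =>
      (Finset.sum_eq_zero_iff_of_nonneg (fun i _ => h1 i)).1 h2 i (Finset.mem_univ i)
    have hψ0 : ∀ l, 0 ≤ ψ l := by
      intro l
      have := h4 (χ i l)
      rw [hTw] at this
      simpa [hφ, (hinj i hi).eq_iff] using this
    have hψ : ∀ l, ψ l = 0 := fun i =>
      (Finset.sum_eq_zero_iff_of_nonneg (fun i _ => hψ0 i)).1 h3 i (Finset.mem_univ i)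
    exact Prod.ext (funext hφ) (funext hψ)
  have hcardne : ∀ i : Fin (p + 1), ((Finset.univ.erase i).card : ℝ) = p := by
    intro i; simp
  refine gale_ker T s ?_ (by rw [hc]; simp) ?_ ?_ ?_
  · intro h
    have h1 := hs (Pi.single 0 1, 0)
    rw [h] at h1
    simp at h1
  · intro v hv
    rw [hs] at hv
    rw [Fintype.sum_sigma]
    simp only [Fintype.sum_option, hTv, hsumw]
    have : ∀ i, (p * q - 1) * v.1 i - ∑ l, v.2 l + (q * v.1 i + ∑ l, v.2 l) =
      (p * q - 1 + q : ℝ) * v.1 i := by intro i; ring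
    simp only [this, ← Finset.mul_sum, hv, mul_zero]
  · rintro v hv ⟨⟨i, _ | j⟩, h⟩
    · rw [hs] at hv
      have hw : ∀ i' j, 0 ≤ T v ⟨i', some j⟩ := fun i' j => h _ (by
        intro h; rw [Sigma.mk.injEq] at h; obtain ⟨rfl, h⟩ := h; simp at h)
      have hv' : ∀ k, k ≠ i → 0 ≤ T v ⟨k, none⟩ := fun k hk => h _ (by
        intro h; rw [Sigma.mk.injEq] at h; exact hk h.1)
      set S := ∑ l, v.2 l with hS
      have hwS : ∀ i', 0 ≤ q * v.1 i' + S := fun i' => by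
        rw [← hsumw]; exact Finset.sum_nonneg fun j _ => hw i' j
      have hsplit := Finset.add_sum_erase Finset.univ v.1 (Finset.mem_univ i)
      rw [hv] at hsplit
      have h1 : p * S ≤ (p * q - 1) * ∑ x ∈ Finset.univ.erase i, v.1 x := by
        have h0 := Finset.card_nsmul_le_sum (Finset.univ.erase i)
          (fun x => (p * q - 1 : ℝ) * v.1 x) S (by
            intro k hk
            have := hv' k (Finset.ne_of_mem_erase hk)
            rw [hTv] at this
            linarith)
        rwa [nsmul_eq_mul, hcardne, ← Finset.mul_sum] at h0
      have h2 : ∑ x ∈ Finset.univ.erase i, v.1 x = - v.1 i := by linarith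
      rw [h2] at h1
      have h3 := hwS i
      have h4 : 0 ≤ v.1 i := by nlinarith
      have h5 : S ≤ 0 := by nlinarith
      have h6 : ∀ k, 0 ≤ v.1 k := by
        intro k
        have := hwS k
        by_contra hneg
        push Not at hneg
        nlinarith
      have h7 : v.1 i = 0 :=
        (Finset.sum_eq_zero_iff_of_nonneg (fun i _ => h6 i)).1 hv i (Finset.mem_univ i)
      have h8 : S = 0 := by rw [h7] at h3; linarith
      exact hfin v h6 hv h8 ⟨Fin.last p, by simp [Fin.ext_iff]; omega, hw _⟩
    · rw [hs] at hv
      have hw : ∀ i', i' ≠ i → ∀ j, 0 ≤ T v ⟨i', some j⟩ := fun i' hi j => h _ (by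
        intro h; rw [Sigma.mk.injEq] at h; exact hi h.1)
      have hv' : ∀ k, 0 ≤ T v ⟨k, none⟩ := fun k => h _ (by
        intro h; rw [Sigma.mk.injEq] at h; obtain ⟨rfl, h⟩ := h; simp at h)
      set S := ∑ l, v.2 l with hS
      have hvS : ∀ k, S ≤ (p * q - 1) * v.1 k := by
        intro k; have := hv' k; rw [hTv] at this; linarith
      have hwS : ∀ i', i' ≠ i → 0 ≤ q * v.1 i' + S := fun i' hi => by
        rw [← hsumw]; exact Finset.sum_nonneg fun j _ => hw i' hi j
      have hsplit := Finset.add_sum_erase Finset.univ v.1 (Finset.mem_univ i)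
      rw [hv] at hsplit
      have h1 : p * (-S) ≤ q * ∑ x ∈ Finset.univ.erase i, v.1 x := by
        rw [Finset.mul_sum, ← hcardne i, ← nsmul_eq_mul]
        apply Finset.card_nsmul_le_sum
        intro k hk
        have := hwS k (Finset.ne_of_mem_erase hk)
        linarith
      have h2 : ∑ x ∈ Finset.univ.erase i, v.1 x = - v.1 i := by linarith
      rw [h2] at h1
      have h0 : S ≤ 0 := by
        have : ∑ k : Fin (p + 1), S ≤ ∑ k, (p * q - 1) * v.1 k :=
          Finset.sum_le_sum fun k _ => hvS k
        rw [← Finset.mul_sum, hv] at this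
        simp at this
        by_contra hneg
        push Not at hneg
        nlinarith
      have h3 := hvS i
      -- q S ≤ (pq-1) q φ_i ≤ (pq-1) p S
      have h8 : S = 0 := by
        have h4 : q * S ≤ (p * q - 1) * (p * S) := by nlinarith
        have h5 : (q : ℝ) < (p * q - 1) * p := by nlinarith
        by_contra hne
        have : S < 0 := lt_of_le_of_ne h0 hne
        nlinarith
      have h6 : ∀ k, 0 ≤ v.1 k := by
        intro k
        have := hvS k
        by_contra hneg
        push Not at hneg
        nlinarith
      have hex : ∃ i' : Fin (p + 1), i' ≠ 0 ∧ i' ≠ i := by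
        by_cases hi : i = Fin.last p
        · refine ⟨⟨1, by omega⟩, by simp [Fin.ext_iff], ?_⟩
          rw [hi]; simp [Fin.ext_iff]; omega
        · exact ⟨Fin.last p, by simp [Fin.ext_iff]; omega, fun h => hi h.symm⟩
      obtain ⟨i', h9, h10⟩ := hex
      exact hfin v h6 hv h8 ⟨i', h9, hw _ h10⟩
  · -- (B)
    have key : ∀ i (j : Fin (k i)), ∃ v, s v = 0 ∧
        ∀ x, x ≠ ⟨i, none⟩ → x ≠ ⟨i, some j⟩ → 0 < T v x := by
      intro i j
      obtain ⟨t, ht1, ht2⟩ : ∃ t : ℝ, p * q / k i < t ∧ (k i - 1) * t < p * q - 1 := by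
        have h1 : (k i : ℝ) ≤ q := by exact_mod_cast hkq i
        have h2 := hkpos i
        refine ⟨p * q / k i + (p * q / k i - 1) / k i, ?_, ?_⟩
        · have : 0 < (p * q / k i - 1) / (k i : ℝ) := by
            apply div_pos _ h2
            rw [sub_pos, lt_div_iff₀ h2]
            nlinarith
          linarith
        · set a : ℝ := p * q / k i with ha
          have hak : a * k i = p * q := by rw [ha]; field_simp
          have ha1 : 1 < a := by
            rw [ha, lt_div_iff₀ h2]
            nlinarith
          have h3 : 0 < (a - 1) / k i := by
            apply div_pos _ h2; linarith
          have h4 : (a - 1) / k i * k i = a - 1 := by field_simp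
          nlinarith
      have ht0 : 0 < t := lt_trans (by have := hkpos i; positivity) ht1
      let ψ : Fin q → ℝ := fun l => ∑ j', if j' ≠ j ∧ σ i j' = l then t else 0
      have hψ0 : ∀ l, 0 ≤ ψ l := fun l => Finset.sum_nonneg fun j' _ => by
        split_ifs <;> linarith
      have hψS : ∑ l, ψ l = (k i - 1) * t := by
        simp only [ψ]
        rw [Finset.sum_comm]
        have : ∀ j', (∑ l, if j' ≠ j ∧ σ i j' = l then t else 0) = t - if j' = j then t else 0 := by
          intro j'
          by_cases h : j' = j <;> simp [h]
        simp only [this, Finset.sum_sub_distrib]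
        simp
        ring
      refine ⟨(fun k => 1 - if k = i then (p + 1 : ℝ) else 0, ψ), ?_, ?_⟩
      · rw [hs]; simp
      · rintro ⟨i', _ | j'⟩ hx1 hx2
        · have hi : i' ≠ i := by rintro rfl; exact hx1 rfl
          rw [hTv]
          simp only [hψS, hi, if_false]
          linarith
        · rw [hTw]
          by_cases hi : i' = i
          · subst hi
            have hj : j' ≠ j := by rintro rfl; exact hx2 rfl
            have h1 : t ≤ ∑ l, if χ i' l = j' then ψ l else 0 := by
              have h2 : t ≤ if χ i' (σ i' j') = j' then ψ (σ i' j') else 0 := by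
                rw [if_pos (hχσ i' j')]
                have h3 : t ≤ if j' ≠ j ∧ σ i' j' = σ i' j' then t else 0 := by
                  rw [if_pos ⟨hj, rfl⟩]
                refine h3.trans (Finset.single_le_sum
                  (f := fun j'' => if j'' ≠ j ∧ σ i' j'' = σ i' j' then t else 0)
                  (fun j'' _ => ?_) (Finset.mem_univ j'))
                split_ifs <;> linarith
              refine h2.trans (Finset.single_le_sum
                  (f := fun l => if χ i' l = j' then ψ l else 0)
                  (fun l _ => ?_) (Finset.mem_univ (σ i' j')))
              split_ifs
              · exact hψ0 l
              · exact le_rfl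
            simp only [if_true]
            have h4 : (q : ℝ) / k i' * (1 - (p + 1)) = - (p * q / k i') := by ring
            rw [h4]
            linarith
          · simp only [hi, if_false]
            have h1 : 0 ≤ ∑ l, if χ i' l = j' then ψ l else 0 :=
              Finset.sum_nonneg fun l _ => by
                split_ifs
                · exact hψ0 l
                · exact le_rfl
            have h2 : (0 : ℝ) < q / k i' := div_pos (by linarith) (hkpos i')
            linarith
    rintro ⟨i, _ | j⟩
    · obtain ⟨v, h1, h2⟩ := key i ⟨0, hk i⟩
      exact ⟨⟨i, some ⟨0, hk i⟩⟩, by simp, v, h1, h2⟩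
    · obtain ⟨v, h1, h2⟩ := key i j
      exact ⟨⟨i, none⟩, by simp, v, h1, fun x hx1 hx2 => h2 x hx2 hx1⟩

/-- For every `d ≥ 1` there is an illuminated `d`-polytope with
exactly `M(d)` vertices. -/
theorem exists_illuminated_card_M {d : ℕ} (hd : 1 ≤ d) :
    ∃ P : Set (Euc d), IsDPolytope P ∧ Illuminated P ∧ (verts P).ncard = Mf d := by
  rcases le_or_gt (2 * d) (d + pf d + ⌈(d : ℝ) / (pf d : ℝ)⌉₊ + 1) with h | h
  · rw [Mf, min_eq_left h]
    exact cross_case hd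
  rw [Mf, min_eq_right h.le]
  have hd' : (1 : ℝ) ≤ d := by exact_mod_cast hd
  have hp1 : 1 ≤ pf d := by
    rw [pf, Nat.one_le_ceil_iff]
    have : 1 < Real.sqrt (4 * d + 1) := by
      rw [Real.lt_sqrt] <;> linarith
    linarith
  have hpd : pf d * (pf d - 1) < d := by
    have h1 : (pf d : ℝ) - 1 < (Real.sqrt (4 * d + 1) - 1) / 2 := by
      have := Nat.ceil_lt_add_one (a := (Real.sqrt (4 * d + 1) - 1) / 2) (by
        have : 1 ≤ Real.sqrt (4 * d + 1) := by
          rw [Real.one_le_sqrt]; linarith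
        linarith)
      rw [pf]; linarith
    have h2 : (1 : ℝ) ≤ pf d := by exact_mod_cast hp1
    have h3 := Real.sq_sqrt (show (0 : ℝ) ≤ 4 * d + 1 by positivity)
    have h4 : ((pf d * (pf d - 1) : ℕ) : ℝ) < (d : ℕ) := by
      push_cast [Nat.cast_sub hp1]
      nlinarith
    exact_mod_cast h4
  generalize pf d = p at *
  have hpr : (0 : ℝ) < p := by exact_mod_cast hp1
  have hq1 : d ≤ p * ⌈(d : ℝ) / (p : ℝ)⌉₊ := by
    have := Nat.le_ceil ((d : ℝ) / (p : ℝ))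
    rw [div_le_iff₀ hpr] at this
    have h2 : (d : ℝ) ≤ ((p * ⌈(d : ℝ) / (p : ℝ)⌉₊ : ℕ) : ℝ) := by push_cast; linarith
    exact_mod_cast h2
  have hq2 : p * ⌈(d : ℝ) / (p : ℝ)⌉₊ < d + p := by
    have := Nat.ceil_lt_add_one (a := (d : ℝ) / (p : ℝ)) (by positivity)
    have h3 : (p : ℝ) * ⌈(d : ℝ) / (p : ℝ)⌉₊ < p * ((d : ℝ) / p + 1) :=
      mul_lt_mul_of_pos_left this hpr
    have h4 : p * ((d : ℝ) / p + 1) = d + p := by field_simp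
    rw [h4] at h3
    exact_mod_cast h3
  generalize ⌈(d : ℝ) / (p : ℝ)⌉₊ = q at *
  have hp2 : 2 ≤ p := by
    by_contra hlt
    have : p = 1 := by omega
    subst this
    omega
  obtain ⟨r, rfl⟩ : ∃ r, p = r + 1 := ⟨p - 1, by omega⟩
  have hpq : r + 1 ≤ q := by
    by_contra hlt
    have : q ≤ r := by omega
    have : (r + 1) * q ≤ (r + 1) * r := Nat.mul_le_mul_left _ this
    simp at hpd
    omega
  -- size of the small star
  have hg1 : r * q < d := by nlinarith
  have hg2 : d ≤ r * q + q := by nlinarith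
  obtain ⟨g, hg⟩ : ∃ g, d = r * q + g := ⟨d - r * q, by omega⟩
  have hgpos : 0 < g := by omega
  have hgq : g ≤ q := by omega
  have hk1 : ∀ i : Fin (r + 1 + 1), 1 ≤ (if i = 0 then g else q) := by
    intro i; split_ifs <;> omega
  have hkq : ∀ i : Fin (r + 1 + 1), (if i = 0 then g else q) ≤ q := by
    intro i; split_ifs <;> omega
  have hst := star_case (p := r + 1) (q := q) (d := d) hp2 (by omega)
    (fun i => if i = 0 then g else q) hk1 hkq
    (fun i l => if hl : l.1 < (if i = 0 then g else q) then ⟨l.1, hl⟩ else ⟨0, hk1 i⟩)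
    (fun i j => ⟨j.1, lt_of_lt_of_le j.2 (hkq i)⟩)
    (by intro i j; simp only [j.2, dif_pos])
    (by
      intro i hi a b hab
      have ha : a.1 < (if i = 0 then g else q) := by rw [if_neg hi]; exact a.2
      have hb : b.1 < (if i = 0 then g else q) := by rw [if_neg hi]; exact b.2
      simp only [ha, hb, dif_pos, Fin.mk.injEq] at hab
      exact Fin.ext hab)
    (by
      rw [Fin.sum_univ_succ]
      simp
      rw [hg]
      ring)
  rw [show d + (r + 1) + q + 1 = d + (r + 1 + 1 + q) by ring]
  exact hst
end
end

section
/- Let P be a d-polytope with exactly 2d vertices whose vertex set can be partitioned into d pairs {u₁,v₁}, …, {u_d,v_d} such that each segment [u_i, v_i] is an inner diagonal of P. Then every proper face of P contains at most one vertex from each pair, and P is combinatorially equivalent to the d-dimensional crosspolytope conv{±e₁, …, ±e_d}. -/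
open scoped RealInnerProductSpace

noncomputable section

section AbstractPart

variable {A : Type*} [AddCommGroup A] [Module ℝ A] [FiniteDimensional ℝ A] {d : ℕ}

theorem cp_dim {J : Type*} [Fintype J] (φ : J → Module.Dual ℝ A)
    (hJ : Fintype.card J + 2 ≤ Module.finrank ℝ A) (l : A) :
    ∃ m : A, (∀ j, φ j m = 0) ∧ ∀ s : ℝ, m ≠ s • l := by
  by_contra hcon
  push Not at hcon
  have h1 : LinearMap.ker (LinearMap.pi φ) ≤ Submodule.span ℝ {l} := by
    intro m hm
    obtain ⟨s, hs⟩ := hcon m (fun j => by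
      have := congrFun (LinearMap.mem_ker.1 hm) j
      simpa using this)
    exact Submodule.mem_span_singleton.2 ⟨s, hs.symm⟩
  have h2 := Submodule.finrank_mono h1
  have h3 : Module.finrank ℝ (Submodule.span ℝ {l}) ≤ 1 := by
    have := finrank_span_le_card (R := ℝ) ({l} : Set A)
    simpa using this
  have h4 := LinearMap.finrank_range_add_finrank_ker (LinearMap.pi φ)
  have h5 := Submodule.finrank_le (LinearMap.range (LinearMap.pi φ))
  rw [Module.finrank_fintype_fun_eq_card] at h5
  omega

/-- The valid functionals: nonzero and nonpositive on all points. -/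
def CpValid (q : Fin d → Bool → Module.Dual ℝ A) (a : A) : Prop :=
  a ≠ 0 ∧ ∀ i b, q i b a ≤ 0

theorem cp_pivot (hd : 0 < d) (q : Fin d → Bool → Module.Dual ℝ A)
    (H : ∀ a, CpValid q a → ∀ i b, q i b a = 0 → q i (!b) a ≠ 0)
    (l m : A) (hl : CpValid q l) (hm : ∀ i b, q i b l = 0 → q i b m ≤ 0)
    (hlm : ∀ s : ℝ, m ≠ s • l) :
    ∃ m', CpValid q m' ∧ (∀ i b, q i b l = 0 → q i b m' = q i b m) ∧
      ∃ i b, q i b l < 0 ∧ q i b m' = 0 := by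
  classical
  let T : Finset (Fin d × Bool) := Finset.univ.filter fun w => q w.1 w.2 l < 0
  have hT : T.Nonempty := by
    by_cases h : q ⟨0, hd⟩ true l = 0
    · refine ⟨(⟨0, hd⟩, false), ?_⟩
      have := H l hl _ _ h
      simp only [T, Finset.mem_filter, Finset.mem_univ, true_and]
      exact lt_of_le_of_ne (hl.2 _ _) this
    · refine ⟨(⟨0, hd⟩, true), ?_⟩
      simp only [T, Finset.mem_filter, Finset.mem_univ, true_and]
      exact lt_of_le_of_ne (hl.2 _ _) h
  obtain ⟨w, hwT, hw⟩ := T.exists_min_image (fun w => q w.1 w.2 m / q w.1 w.2 l) hT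
  have hwl : q w.1 w.2 l < 0 := by simpa [T] using hwT
  set s : ℝ := q w.1 w.2 m / q w.1 w.2 l with hs
  refine ⟨m - s • l, ⟨?_, ?_⟩, ?_, w.1, w.2, hwl, ?_⟩
  · exact sub_ne_zero.2 (hlm s)
  · intro i b
    rcases (hl.2 i b).lt_or_eq with h | h
    · have h1 := hw (i, b) (by simpa [T] using h)
      have h2 : s ≤ q i b m / q i b l := h1
      rw [le_div_iff_of_neg h] at h2
      simp only [map_sub, map_smul, smul_eq_mul]
      linarith
    · simp only [map_sub, map_smul, smul_eq_mul, h]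
      have := hm i b h
      linarith
  · intro i b h
    simp [h]
  · simp only [map_sub, map_smul, smul_eq_mul, hs]
    rw [div_mul_cancel₀ _ hwl.ne]
    ring

theorem cp_start (hd : 0 < d) (hA : Module.finrank ℝ A = d + 1)
    (q : Fin d → Bool → Module.Dual ℝ A)
    (H : ∀ a, CpValid q a → ∀ i b, q i b a = 0 → q i (!b) a ≠ 0)
    (a₀ : A) (ha₀ : CpValid q a₀) :
    ∃ l, CpValid q l ∧ ∃ ε : Fin d → Bool, ∀ i, q i (ε i) l = 0 := by
  classical
  let Z : A → Finset (Fin d × Bool) := fun a => Finset.univ.filter fun w => q w.1 w.2 a = 0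
  have hfin : (Z '' {a | CpValid q a}).Finite := Set.toFinite _
  obtain ⟨z, hz⟩ := hfin.exists_maximal ⟨_, a₀, ha₀, rfl⟩
  obtain ⟨⟨l, hl, rfl⟩, hmax⟩ := hz
  refine ⟨l, hl, ?_⟩
  suffices h : ∀ i, ∃ b, q i b l = 0 by
    choose ε hε using h
    exact ⟨ε, hε⟩
  by_contra hcon
  push Not at hcon
  obtain ⟨i, hi⟩ := hcon
  obtain ⟨m, hm, hml⟩ := cp_dim (J := {j : Fin d // j ≠ i})
    (fun j => if q j true l = 0 then q j true else q j false) (by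
      rw [hA, Fintype.card_subtype_compl]; simp; omega) l
  have hm0 : ∀ j b, q j b l = 0 → q j b m = 0 := by
    intro j b hjb
    have hji : j ≠ i := by rintro rfl; exact hi b hjb
    have h1 := hm ⟨j, hji⟩
    cases b
    · have h2 := H l hl _ _ hjb
      simp only [Bool.not_false] at h2
      simpa [h2] using h1
    · simpa [hjb] using h1
  obtain ⟨m', hv, hag, i', b', h1, h2⟩ :=
    cp_pivot hd q H l m hl (fun j b h => (hm0 j b h).le) hml
  have hle : Z l ≤ Z m' := by
    intro w hw
    simp only [Z, Finset.mem_filter, Finset.mem_univ, true_and] at hw ⊢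
    rw [hag _ _ hw, hm0 _ _ hw]
  have := hmax ⟨m', hv, rfl⟩ hle
  have h3 : (i', b') ∈ Z l := this (by simpa [Z] using h2)
  simp only [Z, Finset.mem_filter, Finset.mem_univ, true_and] at h3
  exact h1.ne h3

theorem cp_swap (hd : 0 < d) (hA : Module.finrank ℝ A = d + 1)
    (q : Fin d → Bool → Module.Dual ℝ A)
    (H : ∀ a, CpValid q a → ∀ i b, q i b a = 0 → q i (!b) a ≠ 0)
    (ε : Fin d → Bool) (j : Fin d)
    (h : ∃ l, CpValid q l ∧ ∀ i, q i (ε i) l = 0) :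
    ∃ l, CpValid q l ∧ q j (!ε j) l = 0 ∧ ∀ i, i ≠ j → q i (ε i) l = 0 := by
  classical
  obtain ⟨l, hl, hε⟩ := h
  have hcard : Fintype.card {i : Fin d // i ≠ j} + 2 ≤ Module.finrank ℝ A := by
    rw [hA, Fintype.card_subtype_compl]; simp; omega
  have hm : ∃ m : A, (∀ i, i ≠ j → q i (ε i) m = 0) ∧ (∀ s : ℝ, m ≠ s • l) ∧
      q j (ε j) m ≤ 0 := by
    obtain ⟨m, hm, hml⟩ := cp_dim (J := {i : Fin d // i ≠ j})
      (fun i => q i (ε i)) hcard l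
    rcases le_total (q j (ε j) m) 0 with h | h
    · exact ⟨m, fun i hi => hm ⟨i, hi⟩, hml, h⟩
    · refine ⟨-m, fun i hi => ?_, fun s hs => hml (-s) ?_, ?_⟩
      · have := hm ⟨i, hi⟩
        simpa using this
      · rw [neg_smul, ← hs, neg_neg]
      · simpa using h
  obtain ⟨m, hm, hml, hmj⟩ := hm
  have hb : ∀ i b, q i b l = 0 → b = ε i := by
    intro i b hib
    by_contra hne
    have h1 := H l hl _ _ (hε i)
    rw [← Bool.eq_not.2 hne] at h1
    exact h1 hib
  obtain ⟨m', hv, hag, i', b', h1, h2⟩ :=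
    cp_pivot hd q H l m hl (fun i b h => by
      rw [hb i b h]
      by_cases hij : i = j
      · subst hij; exact hmj
      · exact (hm i hij).le) hml
  have hz : ∀ i, i ≠ j → q i (ε i) m' = 0 := fun i hi => by
    rw [hag _ _ (hε i), hm i hi]
  have hb' : b' = !ε i' := by
    refine Bool.eq_not.2 ?_
    rintro rfl
    exact h1.ne (hε i')
  subst hb'
  have hij : i' = j := by
    by_contra hij
    exact H m' hv _ _ (hz i' hij) h2
  subst hij
  exact ⟨m', hv, h2, hz⟩

theorem cp_all (hd : 0 < d) (hA : Module.finrank ℝ A = d + 1)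
    (q : Fin d → Bool → Module.Dual ℝ A)
    (H : ∀ a, CpValid q a → ∀ i b, q i b a = 0 → q i (!b) a ≠ 0)
    (a₀ : A) (ha₀ : CpValid q a₀) (ε : Fin d → Bool) :
    ∃ l, CpValid q l ∧ ∀ i, q i (ε i) l = 0 := by
  classical
  obtain ⟨l₀, hl₀, ε₀, hε₀⟩ := cp_start hd hA q H a₀ ha₀
  have key : ∀ s : Finset (Fin d), ∃ l, CpValid q l ∧
      ∀ i, q i (if i ∈ s then ε i else ε₀ i) l = 0 := by
    intro s
    induction s using Finset.induction_on with
    | empty => exact ⟨l₀, hl₀, by simpa using hε₀⟩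
    | insert j s hj ih =>
      by_cases he : ε j = ε₀ j
      · obtain ⟨l, hl, h⟩ := ih
        refine ⟨l, hl, fun i => ?_⟩
        have := h i
        by_cases hij : i = j
        · subst hij
          simpa [hj, he] using this
        · simpa [hij] using this
      · obtain ⟨l, hl, h1, h2⟩ := cp_swap hd hA q H _ j ih
        refine ⟨l, hl, fun i => ?_⟩
        by_cases hij : i = j
        · subst hij
          simp only [hj, if_false] at h1
          simpa [Bool.eq_not.2 he] using h1
        · simpa [hij] using h2 i hij
  simpa using key Finset.univ

theorem cp_faces (hd : 0 < d) (hA : Module.finrank ℝ A = d + 1)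
    (q : Fin d → Bool → Module.Dual ℝ A)
    (H : ∀ a, CpValid q a → ∀ i b, q i b a = 0 → q i (!b) a ≠ 0)
    (a₀ : A) (ha₀ : CpValid q a₀) (σ : Fin d → Bool → Prop)
    (hσ : ∀ i b, σ i b → ¬ σ i (!b)) :
    ∃ l, (∀ i b, q i b l ≤ 0) ∧ ∀ i b, q i b l = 0 ↔ σ i b := by
  classical
  choose L hL hL0 using cp_all hd hA q H a₀ ha₀
  let T : Finset (Fin d → Bool) := Finset.univ.filter fun ε => ∀ i b, σ i b → b = ε i
  have hle : ∀ i b, q i b (∑ ε ∈ T, L ε) ≤ 0 := fun i b => by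
    rw [map_sum]
    exact Finset.sum_nonpos fun ε _ => (hL ε).2 i b
  refine ⟨∑ ε ∈ T, L ε, hle, fun i b => ⟨fun h => ?_, fun h => ?_⟩⟩
  · by_contra hn
    rw [map_sum, Finset.sum_eq_zero_iff_of_nonpos (fun ε _ => (hL ε).2 i b)] at h
    let ε : Fin d → Bool := fun k => if k = i then !b else if σ k true then true else false
    have hε : ε ∈ T := by
      simp only [T, Finset.mem_filter, Finset.mem_univ, true_and]
      intro k c hk
      by_cases hki : k = i
      · subst hki
        simp only [ε, if_true]
        refine Bool.eq_not.2 ?_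
        rintro rfl
        exact hn hk
      · cases c
        · have := hσ k _ hk
          simp only [Bool.not_false] at this
          simp [ε, hki, this]
        · simp [ε, hki, hk]
    have h1 := h ε hε
    have h2 := hL0 ε i
    simp only [ε, if_true] at h2
    exact H _ (hL ε) i b h1 h2
  · rw [map_sum]
    refine Finset.sum_eq_zero fun ε hε => ?_
    simp only [T, Finset.mem_filter, Finset.mem_univ, true_and] at hε
    rw [hε i b h]
    exact hL0 ε i

end AbstractPart

theorem cp_interior {d : ℕ} {P : Set (Euc d)} {z : Euc d} (hz : z ∈ interior P)
    (g : Euc d →ₗ[ℝ] ℝ) (hg : ∀ y ∈ P, g y ≤ g z) : g = 0 := by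
  have key : ∀ w, g w ≤ 0 := by
    intro w
    have hc : Filter.Tendsto (fun t : ℝ => z + t • w) (nhds 0) (nhds z) := by
      have : Continuous (fun t : ℝ => z + t • w) := by fun_prop
      simpa using this.tendsto 0
    have h1 : ∀ᶠ t in nhds (0 : ℝ), z + t • w ∈ P :=
      hc.eventually (mem_interior_iff_mem_nhds.1 hz)
    have h2 := (h1.filter_mono nhdsWithin_le_nhds : ∀ᶠ t in nhdsWithin (0 : ℝ) (Set.Ioi 0), _)
    obtain ⟨t, ht, ht0⟩ := (h2.and self_mem_nhdsWithin).exists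
    have h3 := hg _ ht
    simp only [map_add, map_smul, smul_eq_mul] at h3
    have ht0' : 0 < t := ht0
    by_contra hcon
    push Not at hcon
    nlinarith [mul_pos ht0' hcon]
  ext w
  have h1 := key w
  have h2 := key (-w)
  simp only [map_neg] at h2
  simp only [LinearMap.zero_apply]
  linarith

theorem cp_hull {d : ℕ} {P : Set (Euc d)} (hP : IsPolytope P) :
    P = convexHull ℝ (verts P) := by
  obtain ⟨V, hV, rfl⟩ := hP
  have hc : IsCompact (convexHull ℝ V) := hV.isCompact_convexHull ℝ
  have h1 := closure_convexHull_extremePoints hc (convex_convexHull ℝ V)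
  have hf : (verts (convexHull ℝ V)).Finite := hV.subset extremePoints_convexHull_subset
  have h2 : IsClosed (convexHull ℝ (verts (convexHull ℝ V))) := hf.isClosed_convexHull ℝ
  rw [← h2.closure_eq]
  exact h1.symm

theorem cp_part1 {d : ℕ} {P : Set (Euc d)} (u v : Fin d → Euc d)
    (hdiag : ∀ i : Fin d, InnerDiagonal P (u i) (v i)) :
    ∀ F : Set (Euc d), IsExposed ℝ P F → F ≠ P →
        ∀ i : Fin d, ¬ (u i ∈ F ∧ v i ∈ F) := by
  rintro F hF hne i ⟨hu, hv⟩
  obtain ⟨g, hg⟩ := hF ⟨_, hu⟩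
  obtain ⟨-, -, -, z, ⟨a, b, ha, hb, hab, hz⟩, hzi⟩ := hdiag i
  have hu' := hu
  have hv' := hv
  rw [hg] at hu' hv'
  have h0 : (g : Euc d →ₗ[ℝ] ℝ) = 0 := by
    refine cp_interior hzi _ fun y hy => ?_
    have h1 := hu'.2 y hy
    have h2 := hv'.2 y hy
    rw [← hz]
    simp only [ContinuousLinearMap.coe_coe, map_add, map_smul, smul_eq_mul]
    have : b = 1 - a := by linarith
    subst this
    nlinarith [mul_le_mul_of_nonneg_left h1 ha.le, mul_le_mul_of_nonneg_left h2 hb.le]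
  apply hne
  rw [hg]
  ext x
  have h3 : ∀ w, g w = 0 := fun w => LinearMap.congr_fun h0 w
  simp [h3]

/-- The points indexed by `Fin d × Bool`. -/
def cpPt {d : ℕ} (u v : Fin d → Euc d) (i : Fin d) (b : Bool) : Euc d :=
  if b then u i else v i

theorem cpPt_mem {d : ℕ} {P : Set (Euc d)} {u v : Fin d → Euc d}
    (hverts : verts P = Set.range u ∪ Set.range v) (i : Fin d) (b : Bool) :
    cpPt u v i b ∈ verts P := by
  rw [hverts]
  cases b <;> simp [cpPt]

theorem cpPt_surj {d : ℕ} {P : Set (Euc d)} {u v : Fin d → Euc d}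
    (hverts : verts P = Set.range u ∪ Set.range v) {x : Euc d} (hx : x ∈ verts P) :
    ∃ i b, cpPt u v i b = x := by
  rw [hverts] at hx
  rcases hx with ⟨i, rfl⟩ | ⟨i, rfl⟩
  · exact ⟨i, true, rfl⟩
  · exact ⟨i, false, rfl⟩

/-- Evaluation of the affine functional `(a, c)` at `x`. -/
def cpEv {d : ℕ} (x : Euc d) : Module.Dual ℝ (Euc d × ℝ) :=
  (innerₛₗ ℝ x).comp (LinearMap.fst ℝ _ _) + LinearMap.snd ℝ _ _

theorem cpEv_apply {d : ℕ} (x : Euc d) (a : Euc d × ℝ) : cpEv x a = ⟪a.1, x⟫ + a.2 := by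
  simp [cpEv, real_inner_comm]

theorem cpEv_le {d : ℕ} {P : Set (Euc d)} (hP : IsPolytope P) (a : Euc d × ℝ)
    (ha : ∀ x ∈ verts P, cpEv x a ≤ 0) : ∀ x ∈ P, cpEv x a ≤ 0 := by
  intro x hx
  rw [cp_hull hP] at hx
  have hconv : Convex ℝ {x : Euc d | cpEv x a ≤ 0} := by
    have : {x : Euc d | cpEv x a ≤ 0} = {x : Euc d | innerₛₗ ℝ a.1 x ≤ -a.2} := by
      ext x
      simp only [Set.mem_ofPred_eq, cpEv_apply, innerₛₗ_apply_apply]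
      constructor <;> intro h <;> linarith
    rw [this]
    exact convex_halfSpace_le (innerₛₗ ℝ a.1).isLinear _
  exact convexHull_min ha hconv hx

theorem cp_faceChar {d : ℕ} (hd : 0 < d) {P : Set (Euc d)}
    (hP : IsPolytope P) (u v : Fin d → Euc d)
    (hverts : verts P = Set.range u ∪ Set.range v)
    (hdiag : ∀ i : Fin d, InnerDiagonal P (u i) (v i)) (S : Set (Euc d)) (hS : S ⊆ verts P) :
    IsFaceVertexSet P S ↔ (S = verts P ∨ ∀ i, ¬ (u i ∈ S ∧ v i ∈ S)) := by
  constructor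
  · rintro ⟨F, hF, rfl⟩
    by_cases h : F = P
    · left
      subst h
      exact Set.inter_eq_left.2 (fun x hx => hx.1)
    · right
      rintro i ⟨h1, h2⟩
      exact cp_part1 u v hdiag F hF h i ⟨h1.2, h2.2⟩
  · rintro (rfl | h)
    · refine ⟨P, IsExposed.refl P, ?_⟩
      exact (Set.inter_eq_left.2 (fun x hx => hx.1)).symm
    · have hA : Module.finrank ℝ (Euc d × ℝ) = d + 1 := by simp
      have H' : ∀ a, CpValid (fun i b => cpEv (cpPt u v i b)) a → ∀ i,
          ¬ (cpEv (u i) a = 0 ∧ cpEv (v i) a = 0) := by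
        rintro a ⟨ha, hle⟩ i ⟨h1, h2⟩
        have hle' := cpEv_le hP a (fun x hx => by
          obtain ⟨i, b, rfl⟩ := cpPt_surj hverts hx
          exact hle i b)
        obtain ⟨-, -, -, z, ⟨s, t, hs, ht, hst, hz⟩, hzi⟩ := hdiag i
        have hz0 : cpEv z a = 0 := by
          rw [cpEv_apply] at h1 h2 ⊢
          rw [← hz, inner_add_right, inner_smul_right, inner_smul_right]
          have : t = 1 - s := by linarith
          subst this
          linear_combination s * h1 + (1 - s) * h2
        have hz1 := hz0
        rw [cpEv_apply] at hz1
        have h0 : innerₛₗ ℝ a.1 = 0 := by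
          refine cp_interior hzi _ fun y hy => ?_
          have := hle' y hy
          rw [cpEv_apply] at this
          simp only [innerₛₗ_apply_apply]
          linarith
        have h3 : ∀ w, ⟪a.1, w⟫ = 0 := fun w => LinearMap.congr_fun h0 w
        apply ha
        have h4 : a.1 = 0 := inner_self_eq_zero.1 (h3 a.1)
        have h5 : a.2 = 0 := by rw [h3] at hz1; linarith
        exact Prod.ext h4 h5
      have H : ∀ a, CpValid (fun i b => cpEv (cpPt u v i b)) a → ∀ i b,
          cpEv (cpPt u v i b) a = 0 → cpEv (cpPt u v i (!b)) a ≠ 0 := by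
        intro a ha i b h1 h2
        cases b
        · exact H' a ha i ⟨h2, h1⟩
        · exact H' a ha i ⟨h1, h2⟩
      obtain ⟨l, hl, hl0⟩ := cp_faces hd hA (fun i b => cpEv (cpPt u v i b)) H (0, -1)
        ⟨by simp, fun i b => by simp [cpEv_apply]⟩ (fun i b => cpPt u v i b ∈ S) (by
          intro i b h1 h2
          cases b
          · exact h i ⟨h2, h1⟩
          · exact h i ⟨h1, h2⟩)
      have hle' := cpEv_le hP l (fun x hx => by
          obtain ⟨i, b, rfl⟩ := cpPt_surj hverts hx
          exact hl i b)
      have hiff : ∀ x ∈ verts P, (cpEv x l = 0 ↔ x ∈ S) := by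
        intro x hx
        obtain ⟨i, b, rfl⟩ := cpPt_surj hverts hx
        exact hl0 i b
      rcases S.eq_empty_or_nonempty with rfl | ⟨x₀, hx₀⟩
      · exact ⟨∅, fun hne => absurd hne (by simp), by simp⟩
      · refine ⟨{x ∈ P | ∀ y ∈ P, innerSL ℝ l.1 y ≤ innerSL ℝ l.1 x},
          fun _ => ⟨innerSL ℝ l.1, rfl⟩, ?_⟩
        have hx0 := (hiff x₀ (hS hx₀)).2 hx₀
        rw [cpEv_apply] at hx0
        ext x
        simp only [Set.mem_inter_iff, Set.mem_ofPred_eq, innerSL_apply_apply]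
        constructor
        · intro hx
          refine ⟨hS hx, (hS hx).1, fun y hy => ?_⟩
          have h1 := hle' y hy
          have h2 := (hiff x (hS hx)).2 hx
          rw [cpEv_apply] at h1 h2
          linarith
        · rintro ⟨hx, -, hm⟩
          refine (hiff x hx).1 ?_
          have h1 := hle' x hx.1
          have h2 := hm x₀ (hS hx₀).1
          rw [cpEv_apply] at h1 ⊢
          linarith

theorem cross_polytope {d : ℕ} : IsPolytope (crossPolytope d) := by
  refine ⟨_, ?_, rfl⟩
  have : {x : Euc d | ∃ i : Fin d, x = EuclideanSpace.single i 1 ∨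
      x = -EuclideanSpace.single i 1} =
      Set.range (fun i : Fin d => (EuclideanSpace.single i 1 : Euc d)) ∪
      Set.range (fun i : Fin d => -(EuclideanSpace.single i 1 : Euc d)) := by
    ext x
    simp only [Set.mem_ofPred_eq, Set.mem_union, Set.mem_range]
    constructor
    · rintro ⟨i, rfl | rfl⟩
      · exact Or.inl ⟨i, rfl⟩
      · exact Or.inr ⟨i, rfl⟩
    · rintro (⟨i, rfl⟩ | ⟨i, rfl⟩)
      · exact ⟨i, Or.inl rfl⟩
      · exact ⟨i, Or.inr rfl⟩
  rw [this]
  exact (Set.finite_range _).union (Set.finite_range _)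

theorem cross_coord {d : ℕ} (i : Fin d) (c : ℝ) (hc : c ≠ 0) (T : Set (Euc d))
    (hT : ∀ x ∈ T, c * x i ≤ 0) : EuclideanSpace.single i c ∉ convexHull ℝ T := by
  intro h
  have hconv : Convex ℝ {x : Euc d | c * x i ≤ 0} := by
    intro x hx y hy a b ha hb _
    simp only [Set.mem_ofPred_eq, PiLp.add_apply, PiLp.smul_apply, smul_eq_mul] at *
    nlinarith [mul_nonneg ha (neg_nonneg.2 hx), mul_nonneg hb (neg_nonneg.2 hy)]
  have h1 : c * (EuclideanSpace.single i c : Euc d) i ≤ 0 := convexHull_min hT hconv h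
  simp only [PiLp.single_apply, if_true] at h1
  nlinarith [mul_self_pos.2 hc]

theorem cross_verts {d : ℕ} : verts (crossPolytope d) =
    Set.range (fun i : Fin d => (EuclideanSpace.single i 1 : Euc d)) ∪
      Set.range (fun i : Fin d => -(EuclideanSpace.single i 1 : Euc d)) := by
  apply Set.Subset.antisymm
  · intro x hx
    obtain ⟨i, rfl | rfl⟩ := extremePoints_convexHull_subset hx
    · exact Or.inl ⟨i, rfl⟩
    · exact Or.inr ⟨i, rfl⟩
  · have key : ∀ (i : Fin d) (c : ℝ), (c = 1 ∨ c = -1) →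
        (EuclideanSpace.single i c : Euc d) ∈ verts (crossPolytope d) := by
      intro i c hc
      by_contra hn
      have hc0 : c ≠ 0 := by rcases hc with rfl | rfl <;> norm_num
      refine cross_coord i c hc0 (verts (crossPolytope d)) ?_ ?_
      · intro x hx
        have hxne : x ≠ EuclideanSpace.single i c := by rintro rfl; exact hn hx
        obtain ⟨j, hj⟩ := extremePoints_convexHull_subset hx
        by_cases hij : i = j
        · subst hij
          rcases hc with rfl | rfl <;> rcases hj with rfl | rfl
          · exact absurd rfl hxne
          · simp
          · simp
          · refine absurd ?_ hxne
            ext k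
            by_cases hk : k = i <;> simp [hk]
        · rcases hj with rfl | rfl <;> simp [hij]
      · rw [← cp_hull cross_polytope]
        refine subset_convexHull ℝ _ ⟨i, ?_⟩
        rcases hc with rfl | rfl
        · exact Or.inl rfl
        · right
          ext k
          by_cases hk : k = i <;> simp [hk]
    rintro x (⟨i, rfl⟩ | ⟨i, rfl⟩)
    · exact key i 1 (Or.inl rfl)
    · have := key i (-1) (Or.inr rfl)
      convert this using 1
      ext k
      by_cases hk : k = i <;> simp [hk]

theorem cross_neg {d : ℕ} {x : Euc d} (hx : x ∈ crossPolytope d) : -x ∈ crossPolytope d := by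
  have hconv : Convex ℝ {x : Euc d | -x ∈ crossPolytope d} := by
    exact (convex_convexHull ℝ _).is_linear_preimage IsLinearMap.isLinearMap_neg
  refine convexHull_min ?_ hconv hx
  rintro y ⟨i, rfl | rfl⟩
  · exact subset_convexHull ℝ _ ⟨i, Or.inr rfl⟩
  · exact subset_convexHull ℝ _ ⟨i, Or.inl (neg_neg _)⟩

theorem cross_interior {d : ℕ} (hd : 0 < d) : (0 : Euc d) ∈ interior (crossPolytope d) := by
  have hconv : Convex ℝ (crossPolytope d) := convex_convexHull ℝ _
  have hmem : ∀ i : Fin d, (EuclideanSpace.single i 1 : Euc d) ∈ crossPolytope d :=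
    fun i => subset_convexHull ℝ _ ⟨i, Or.inl rfl⟩
  have h0 : (0 : Euc d) ∈ crossPolytope d := by
    have h1 := hmem ⟨0, hd⟩
    have := hconv h1 (cross_neg h1) (a := 1 / 2) (b := 1 / 2)
      (by norm_num) (by norm_num) (by norm_num)
    simpa using this
  have hspan : affineSpan ℝ (crossPolytope d) = ⊤ := by
    rw [AffineSubspace.affineSpan_eq_top_iff_vectorSpan_eq_top_of_nonempty ℝ (Euc d) (Euc d) ⟨0, h0⟩,
      eq_top_iff, ← (EuclideanSpace.basisFun (Fin d) ℝ).toBasis.span_eq, Submodule.span_le]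
    rintro _ ⟨i, rfl⟩
    have := vsub_mem_vectorSpan ℝ (hmem i) h0
    simpa using this
  have hne : (interior (crossPolytope d)).Nonempty := hconv.interior_nonempty_iff_affineSpan_eq_top.2 hspan
  obtain ⟨x, hx⟩ := hne
  have hx' : -x ∈ interior (crossPolytope d) := by
    have h1 : {y | -y ∈ crossPolytope d} = crossPolytope d := by
      ext y
      exact ⟨fun h => by simpa using cross_neg h, fun h => cross_neg h⟩
    have h2 := (Homeomorph.neg (Euc d)).preimage_interior (crossPolytope d)
    have h3 : (Homeomorph.neg (Euc d)) ⁻¹' (crossPolytope d) = crossPolytope d := h1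
    rw [h3] at h2
    rw [← h2] at hx
    exact hx
  have := hconv.interior hx hx' (a := 1 / 2) (b := 1 / 2)
      (by norm_num) (by norm_num) (by norm_num)
  simpa using this

theorem cross_diag {d : ℕ} (i : Fin d) :
    InnerDiagonal (crossPolytope d) (EuclideanSpace.single i 1) (-EuclideanSpace.single i 1) := by
  refine ⟨?_, ?_, ?_, 0, ?_, cross_interior (Fin.pos i)⟩
  · rw [cross_verts]; exact Or.inl ⟨i, rfl⟩
  · rw [cross_verts]; exact Or.inr ⟨i, rfl⟩
  · intro h
    have := congrArg (fun x : Euc d => x i) h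
    simp at this
    linarith
  · exact ⟨1 / 2, 1 / 2, by norm_num, by norm_num, by norm_num, by simp⟩

/-- If the `2d` vertices of a `d`-polytope `P` are partitioned
into `d` pairs `{uᵢ, vᵢ}`, each spanning an inner diagonal, then every proper face
of `P` contains at most one vertex from each pair, and `P` is combinatorially
equivalent to the `d`-dimensional crosspolytope. -/
theorem matched_polytope_is_crossPolytope {d : ℕ} (P : Set (Euc d))
    (hP : IsDPolytope P) (u v : Fin d → Euc d)
    (hinj : Function.Injective (Sum.elim u v : Fin d ⊕ Fin d → Euc d))
    (hverts : verts P = Set.range u ∪ Set.range v)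
    (hcard : (verts P).ncard = 2 * d)
    (hdiag : ∀ i : Fin d, InnerDiagonal P (u i) (v i)) :
    (∀ F : Set (Euc d), IsExposed ℝ P F → F ≠ P →
        ∀ i : Fin d, ¬ (u i ∈ F ∧ v i ∈ F)) ∧
      CombEquiv P (crossPolytope d) := by
  refine ⟨cp_part1 u v hdiag, ?_⟩
  rcases Nat.eq_zero_or_pos d with rfl | hd
  · exfalso
    have h1 : verts P = ∅ := by rw [hverts]; simp
    have h2 : P = ∅ := by
      have := cp_hull hP.1
      rwa [h1, convexHull_empty] at this
    have h3 := hP.2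
    rw [h2, AffineSubspace.span_empty] at h3
    exact AffineSubspace.bot_ne_top ℝ (Euc 0) (Euc 0) h3
  let e : Fin d → Euc d := fun i => EuclideanSpace.single i 1
  let n : Fin d → Euc d := fun i => -EuclideanSpace.single i 1
  have hinj' : Function.Injective (Sum.elim e n : Fin d ⊕ Fin d → Euc d) := by
    have hev : ∀ i j : Fin d, (e i) j = if j = i then 1 else 0 := fun i j => by simp [e]
    have hnv : ∀ i j : Fin d, (n i) j = if j = i then -1 else 0 := fun i j => by
      by_cases h : j = i <;> simp [n, h]
    rintro (i | i) (j | j) h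
    · have h1 := congrArg (fun x : Euc d => x i) h
      simp only [Sum.elim_inl, hev, if_true] at h1
      by_cases hij : i = j
      · rw [hij]
      · simp [hij] at h1
    · have h1 := congrArg (fun x : Euc d => x i) h
      simp only [Sum.elim_inl, Sum.elim_inr, hev, hnv, if_true] at h1
      split_ifs at h1 <;> norm_num at h1
    · have h1 := congrArg (fun x : Euc d => x i) h
      simp only [Sum.elim_inl, Sum.elim_inr, hev, hnv, if_true] at h1
      split_ifs at h1 <;> norm_num at h1
    · have h1 := congrArg (fun x : Euc d => x i) h
      simp only [Sum.elim_inr, hnv, if_true] at h1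
      by_cases hij : i = j
      · rw [hij]
      · simp [hij] at h1
  have hP' : verts P = Set.range (Sum.elim u v) := by rw [hverts, Set.Sum.elim_range]
  have hQ' : verts (crossPolytope d) = Set.range (Sum.elim e n) := by
    rw [cross_verts, Set.Sum.elim_range]
  let f : Euc d → Euc d := Function.extend (Sum.elim u v) (Sum.elim e n) id
  have hf : ∀ w, f (Sum.elim u v w) = Sum.elim e n w := fun w => hinj.extend_apply _ _ w
  have hfu : ∀ i, f (u i) = e i := fun i => hf (Sum.inl i)
  have hfv : ∀ i, f (v i) = n i := fun i => hf (Sum.inr i)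
  have hbij : Set.BijOn f (verts P) (verts (crossPolytope d)) := by
    rw [hP', hQ']
    refine ⟨?_, ?_, ?_⟩
    · rintro _ ⟨w, rfl⟩
      exact ⟨w, (hf w).symm⟩
    · rintro _ ⟨w, rfl⟩ _ ⟨w', rfl⟩ h
      rw [hf, hf] at h
      rw [hinj' h]
    · rintro _ ⟨w, rfl⟩
      exact ⟨_, ⟨w, rfl⟩, hf w⟩
  refine ⟨f, hbij, fun S hS => ?_⟩
  have hfS : f '' S ⊆ verts (crossPolytope d) := by
    rw [← hbij.image_eq]
    exact Set.image_mono hS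
  rw [cp_faceChar hd hP.1 u v hverts hdiag S hS,
    cp_faceChar hd cross_polytope e n cross_verts cross_diag (f '' S) hfS]
  have hmem : ∀ x ∈ verts P, (f x ∈ f '' S ↔ x ∈ S) := fun x hx =>
    hbij.injOn.mem_image_iff hS hx
  have h1 : (S = verts P ↔ f '' S = verts (crossPolytope d)) := by
    rw [← hbij.image_eq]
    exact (hbij.injOn.image_eq_image_iff hS subset_rfl).symm
  have h2 : ∀ i, (u i ∈ S ↔ e i ∈ f '' S) := fun i => by
    rw [← hfu, hmem _ (hdiag i).1]
  have h3 : ∀ i, (v i ∈ S ↔ n i ∈ f '' S) := fun i => by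
    rw [← hfv, hmem _ (hdiag i).2.1]
  simp only [h1, h2, h3]
end
end
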